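/- The ℂ-linear span of the products θ⁴[δᵢ]θ⁴[δⱼ]θ⁴[δₖ] over triples of even characteristics whose componentwise mod-2 sum δᵢ+δⱼ+δₖ is an even characteristic equals the ℂ-linear span of ALL products θ⁴[δᵢ]θ⁴[δⱼ]θ⁴[δₖ] over triples of even characteristics, and this common span has dimension exactly 35. In particular Ψ₆ = P₀³ − 9P₀(P₁²+P₂²+P₃²−4P₄²) + 54P₁P₂P₃ is a ℂ-linear combination of products θ⁴[δᵢ]θ⁴[δⱼ]θ⁴[δₖ] with δᵢ+δⱼ+δₖ even. -/

import Mathlib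

open scoped BigOperators

namespace TwoLoop

/-- 2×2 complex matrices. -/
abbrev Mat2 := Matrix (Fin 2) (Fin 2) ℂ

/-- The genus-2 Siegel upper half space: symmetric 2×2 complex matrices with
positive definite imaginary part. -/
def SiegelH2 : Set Mat2 := {τ | τ.transpose = τ ∧ (τ.map Complex.im).PosDef}

/-- A (half-integer) theta characteristic `[a;b]`, recorded by its rows `a, b ∈ {0,1}²`. -/
abbrev Char := (Fin 2 → ℤ) × (Fin 2 → ℤ)

/-- The theta constant `θ[a;b](τ) = Σ_{n ∈ ℤ²} exp(πi (n+a/2)ᵀ τ (n+a/2) + πi (n+a/2)·b)`. -/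
noncomputable def theta (κ : Char) (τ : Mat2) : ℂ :=
  ∑' n : Fin 2 → ℤ,
    Complex.exp ((Real.pi : ℂ) * Complex.I *
      ((∑ i, ∑ j, ((n i : ℂ) + (κ.1 i : ℂ) / 2) * τ i j * ((n j : ℂ) + (κ.1 j : ℂ) / 2))
        + ∑ i, ((n i : ℂ) + (κ.1 i : ℂ) / 2) * (κ.2 i : ℂ)))

/-- The ten even characteristics δ₁,…,δ₁₀. -/
def δev : Fin 10 → Char :=
  ![(![0,0], ![0,0]), (![0,0], ![0,1]), (![0,0], ![1,0]), (![0,0], ![1,1]),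
    (![0,1], ![0,0]), (![0,1], ![1,0]), (![1,0], ![0,0]), (![1,0], ![0,1]),
    (![1,1], ![0,0]), (![1,1], ![1,1])]

/-- The six odd characteristics ν₁,…,ν₆. -/
def νodd : Fin 6 → Char :=
  ![(![0,1], ![0,1]), (![1,0], ![1,0]), (![0,1], ![1,1]),
    (![1,0], ![1,1]), (![1,1], ![0,1]), (![1,1], ![1,0])]

/-- `Θ[ε](τ) = θ[ε;0](2τ)`. -/
noncomputable def Θf (ε : Fin 2 → ℤ) (τ : Mat2) : ℂ := theta (ε, ![0,0]) ((2 : ℂ) • τ)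

noncomputable def P0 (τ : Mat2) : ℂ :=
  Θf ![0,0] τ ^ 4 + Θf ![0,1] τ ^ 4 + Θf ![1,0] τ ^ 4 + Θf ![1,1] τ ^ 4
noncomputable def P1 (τ : Mat2) : ℂ :=
  2 * (Θf ![0,0] τ ^ 2 * Θf ![0,1] τ ^ 2 + Θf ![1,0] τ ^ 2 * Θf ![1,1] τ ^ 2)
noncomputable def P2 (τ : Mat2) : ℂ :=
  2 * (Θf ![0,0] τ ^ 2 * Θf ![1,0] τ ^ 2 + Θf ![0,1] τ ^ 2 * Θf ![1,1] τ ^ 2)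
noncomputable def P3 (τ : Mat2) : ℂ :=
  2 * (Θf ![0,0] τ ^ 2 * Θf ![1,1] τ ^ 2 + Θf ![0,1] τ ^ 2 * Θf ![1,0] τ ^ 2)
noncomputable def P4 (τ : Mat2) : ℂ :=
  4 * (Θf ![0,0] τ * Θf ![0,1] τ * Θf ![1,0] τ * Θf ![1,1] τ)

/-- The vector `(P₀,…,P₄)`. -/
noncomputable def Pv : Fin 5 → Mat2 → ℂ := ![P0, P1, P2, P3, P4]

open MvPolynomial in
/-- The Igusa quartic as a polynomial in `x₀,…,x₄`. -/
noncomputable def I4poly : MvPolynomial (Fin 5) ℂ :=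
  X 4 ^ 4 + X 4 ^ 2 * X 0 ^ 2 - X 4 ^ 2 * X 1 ^ 2 - X 4 ^ 2 * X 2 ^ 2 - X 4 ^ 2 * X 3 ^ 2
    + X 1 ^ 2 * X 2 ^ 2 + X 1 ^ 2 * X 3 ^ 2 + X 2 ^ 2 * X 3 ^ 2
    - 2 * (X 0 * X 1 * X 2 * X 3)

/-- The signature `⟨κ|λ⟩ = exp(πi(a_κ·b_λ − b_κ·a_λ))`. -/
noncomputable def sig (κ lam : Char) : ℂ :=
  Complex.exp ((Real.pi : ℂ) * Complex.I *
    (((∑ i, κ.1 i * lam.2 i : ℤ) : ℂ) - ((∑ i, κ.2 i * lam.1 i : ℤ) : ℂ)))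

/-- Componentwise mod-2 sum of characteristics. -/
def addChar (κ lam : Char) : Char :=
  (fun i => (κ.1 i + lam.1 i) % 2, fun i => (κ.2 i + lam.2 i) % 2)

/-- For each even characteristic `δ_d`, the ordering `(k₁,…,k₆)` of `{1,…,6}` (0-indexed) whose
first three entries form the triad of odd characteristics with `δ_d = ν_{k₁}+ν_{k₂}+ν_{k₃}`
and whose last three are the complementary indices. -/
def triad : Fin 10 → Fin 6 → Fin 6 :=
  ![![0,3,5,1,2,4], ![0,1,5,2,3,4], ![0,1,4,2,3,5], ![0,3,4,1,2,5], ![0,1,3,2,4,5],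
    ![0,4,5,1,2,3], ![0,1,2,3,4,5], ![0,2,3,1,4,5], ![0,2,5,1,3,4], ![0,2,4,1,3,5]]

/-- D'Hoker–Phong's `Ξ₆[δ]`. -/
noncomputable def Xi6 (d : Fin 10) (τ : Mat2) : ℂ :=
  ∑ i : Fin 3, ∑ j : Fin 3,
    if i < j then
      sig (νodd (triad d (Fin.castLE (by norm_num) i))) (νodd (triad d (Fin.castLE (by norm_num) j))) *
        ∏ m : Fin 3,
          theta (addChar (addChar (νodd (triad d (Fin.castLE (by norm_num) i)))
              (νodd (triad d (Fin.castLE (by norm_num) j))))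
            (νodd (triad d (⟨m.1 + 3, by omega⟩ : Fin 6)))) τ ^ 4
    else 0

/-- The formal derivative `∂I₄/∂θ⁴[δ]` of the Igusa quartic with respect to the ten fourth
powers of the even theta constants, regarded as independent variables. -/
noncomputable def Dd (d : Fin 10) (τ : Mat2) : ℂ :=
  (1 / 48 : ℂ) *
    (theta (δev d) τ ^ 4 * (∑ d' : Fin 10, theta (δev d') τ ^ 8) - 4 * theta (δev d) τ ^ 12)

/-- `f_δ = 2Ξ₆[δ] − ∂I₄/∂θ⁴[δ]`. -/
noncomputable def fδ (d : Fin 10) (τ : Mat2) : ℂ := 2 * Xi6 d τ - Dd d τ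

/-- `Ψ₆`, the weight-6 modular form. -/
noncomputable def Ψ6 (τ : Mat2) : ℂ :=
  P0 τ ^ 3 - 9 * P0 τ * (P1 τ ^ 2 + P2 τ ^ 2 + P3 τ ^ 2 - 4 * P4 τ ^ 2)
    + 54 * (P1 τ * P2 τ * P3 τ)

/-- `Ψ₁₀`, the weight-10 modular form. -/
noncomputable def Ψ10 (τ : Mat2) : ℂ := ∏ d : Fin 10, theta (δev d) τ ^ 2

/-- A characteristic is even when `a·b` is even. -/
def IsEvenChar (κ : Char) : Prop := (∑ i, κ.1 i * κ.2 i) % 2 = 0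

/-- A characteristic is odd when `a·b` is odd. -/
def IsOddChar (κ : Char) : Prop := (∑ i, κ.1 i * κ.2 i) % 2 = 1

/-!
The duplication formula writes every `θ⁴[δ]` as an integral linear combination of the five quartics
`P₀, …, P₄` in the second-order theta constants. The ten `θ⁴[δ]` therefore satisfy many linear
relations, among them the fifteen quartic Riemann relations. If `δᵢ + δⱼ + δₖ` is odd, then one of
the Riemann relations through `δᵢ` exchanges `δᵢ` for three characteristics whose sum with
`δⱼ + δₖ` is even; hence the two spans coincide, and both are spanned by the cubic monomials in
`P₀, …, P₄`.

There are `35` such monomials, so the dimension follows once the `P`'s satisfy no cubic relation.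
The four second-order theta constants are algebraically independent: along a suitable ray in the
Siegel space they decay exponentially, and the decay rates of the monomials of a given degree are
pairwise distinct. A cubic relation would thus be an identity of forms in four variables, i.e. a
cubic vanishing on the image of the map `(P₀ : … : P₄)`, which is the Igusa quartic. After replacing
`P₀, …, P₃` by `θ⁴[δ₁], …, θ⁴[δ₄]` the Igusa quartic is biquadratic in `P₄` with generically
four distinct roots, so no nonzero polynomial of degree less than four vanishes on it.
-/

open Filter Topology

section ThetaSeries

/-- The general term of the theta series `theta`. -/
noncomputable def thetaTerm (κ : Char) (τ : Mat2) (n : Fin 2 → ℤ) : ℂ :=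
  Complex.exp ((Real.pi : ℂ) * Complex.I *
    ((∑ i, ∑ j, ((n i : ℂ) + (κ.1 i : ℂ) / 2) * τ i j * ((n j : ℂ) + (κ.1 j : ℂ) / 2))
      + ∑ i, ((n i : ℂ) + (κ.1 i : ℂ) / 2) * (κ.2 i : ℂ)))

lemma theta_eq_tsum (κ : Char) (τ : Mat2) : theta κ τ = ∑' n, thetaTerm κ τ n := rfl

lemma SiegelH2.apply_one_zero {τ : Mat2} (hτ : τ ∈ SiegelH2) : τ 1 0 = τ 0 1 :=
  congrFun (congrFun hτ.1 0) 1

lemma SiegelH2.two_smul_mem {τ : Mat2} (hτ : τ ∈ SiegelH2) : (2 : ℂ) • τ ∈ SiegelH2 := by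
  have him : ((2 : ℂ) • τ).map Complex.im = (2 : ℝ) • τ.map Complex.im := by
    ext i j; simp
  exact ⟨by rw [Matrix.transpose_smul, hτ.1], him ▸ hτ.2.smul two_pos⟩

lemma exists_pos_mul_sq_add_sq_le_of_pos {p q r : ℝ} (hp : 0 < p) (hr : 0 < r)
    (hdet : 0 < p * r - q * q) :
    ∃ c > 0, ∀ x y : ℝ, c * (x ^ 2 + y ^ 2) ≤ p * x ^ 2 + 2 * q * x * y + r * y ^ 2 := by
  refine ⟨(p * r - q * q) / (p + r), by positivity, fun x y => ?_⟩
  rw [div_mul_eq_mul_div, div_le_iff₀ (by positivity)]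
  nlinarith [sq_nonneg (p * x + q * y), sq_nonneg (q * x + r * y)]

lemma SiegelH2.exists_le_im {τ : Mat2} (hτ : τ ∈ SiegelH2) :
    ∃ c > 0, ∀ x y : ℝ, c * (x ^ 2 + y ^ 2) ≤
      (τ 0 0).im * x ^ 2 + 2 * (τ 0 1).im * x * y + (τ 1 1).im * y ^ 2 := by
  have hdet := hτ.2.det_pos
  rw [Matrix.det_fin_two] at hdet
  simp only [Matrix.map_apply, SiegelH2.apply_one_zero hτ] at hdet
  exact exists_pos_mul_sq_add_sq_le_of_pos hτ.2.diag_pos hτ.2.diag_pos hdet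

lemma summable_exp_neg_mul_sq_add_sq (a b : ℝ) {c : ℝ} (hc : 0 < c) :
    Summable fun n : Fin 2 → ℤ =>
      Real.exp (-Real.pi * (c * ((n 0 + a) ^ 2 + (n 1 + b) ^ 2))) := by
  have hprod := (HurwitzZeta.hasSum_int_evenKernel a hc).summable.mul_of_nonneg
    (HurwitzZeta.hasSum_int_evenKernel b hc).summable
    (fun _ => (Real.exp_pos _).le) (fun _ => (Real.exp_pos _).le)
  refine ((piFinTwoEquiv fun _ => ℤ).summable_iff.mpr hprod).congr fun n => ?_
  simp only [Function.comp_apply, piFinTwoEquiv_apply, ← Real.exp_add]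
  ring_nf

lemma norm_thetaTerm (κ : Char) {τ : Mat2} (hτ : τ ∈ SiegelH2) (n : Fin 2 → ℤ) :
    ‖thetaTerm κ τ n‖ = Real.exp (-Real.pi * (
      (τ 0 0).im * (n 0 + κ.1 0 / 2) ^ 2
      + 2 * (τ 0 1).im * (n 0 + κ.1 0 / 2) * (n 1 + κ.1 1 / 2)
      + (τ 1 1).im * (n 1 + κ.1 1 / 2) ^ 2)) := by
  have hcast (i : Fin 2) : (n i : ℂ) + (κ.1 i : ℂ) / 2 = ((n i + κ.1 i / 2 : ℝ) : ℂ) := by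
    push_cast; rfl
  simp only [thetaTerm, Complex.norm_exp, Fin.sum_univ_two, SiegelH2.apply_one_zero hτ, hcast]
  generalize (n 0 + κ.1 0 / 2 : ℝ) = x
  generalize (n 1 + κ.1 1 / 2 : ℝ) = y
  simp only [Complex.mul_re, Complex.mul_im, Complex.add_im, Complex.ofReal_re, Complex.ofReal_im,
    Complex.I_re, Complex.I_im, Complex.intCast_im]
  ring_nf

lemma summable_norm_thetaTerm (κ : Char) {τ : Mat2} (hτ : τ ∈ SiegelH2) :
    Summable fun n => ‖thetaTerm κ τ n‖ := by
  obtain ⟨c, hc, hle⟩ := SiegelH2.exists_le_im hτ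
  refine Summable.of_nonneg_of_le (fun _ => norm_nonneg _) (fun n => ?_)
    (summable_exp_neg_mul_sq_add_sq (κ.1 0 / 2) (κ.1 1 / 2) hc)
  rw [norm_thetaTerm κ hτ, Real.exp_le_exp, neg_mul, neg_mul, neg_le_neg_iff]
  exact mul_le_mul_of_nonneg_left (hle _ _) Real.pi_pos.le

end ThetaSeries

section Duplication

/-- A pair of bits as an integer vector, i.e. the upper row `ε ∈ {0,1}²` of a characteristic. -/
def bits (σ : Fin 2 × Fin 2) : Fin 2 → ℤ := ![(σ.1 : ℕ), (σ.2 : ℕ)]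

/-- The lattice change of variables `(n, m) = (p + q + σ, p - q)`, where `σ` is the parity
of `n - m`. -/
def duplicationEquiv :
    (Fin 2 × Fin 2) × (Fin 2 → ℤ) × (Fin 2 → ℤ) ≃ (Fin 2 → ℤ) × (Fin 2 → ℤ) where
  toFun x := (x.2.1 + x.2.2 + bits x.1, x.2.1 - x.2.2)
  invFun y := ((⟨((y.1 0 - y.2 0) % 2).toNat, by omega⟩, ⟨((y.1 1 - y.2 1) % 2).toNat, by omega⟩),
    fun i => y.2 i + (y.1 i - y.2 i) / 2, fun i => (y.1 i - y.2 i) / 2)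
  left_inv := by
    rintro ⟨⟨s, t⟩, p, q⟩
    ext i
    · simp [bits]; omega
    · simp [bits]; omega
    · fin_cases i <;> simp [bits] <;> omega
    · fin_cases i <;> simp [bits] <;> omega
  right_inv := by
    rintro ⟨n, m⟩
    ext i <;> fin_cases i <;> simp [bits] <;> omega

lemma thetaTerm_mul_thetaTerm_duplicationEquiv (a b : Fin 2 → ℤ) {τ : Mat2} (hτ : τ ∈ SiegelH2)
    (σ : Fin 2 × Fin 2) (p q : Fin 2 → ℤ) :
    thetaTerm (a, b) τ (duplicationEquiv (σ, p, q)).1 *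
        thetaTerm (a, b) τ (duplicationEquiv (σ, p, q)).2 =
      (-1) ^ ((bits σ 0 + a 0) * b 0 + (bits σ 1 + a 1) * b 1) *
        (thetaTerm (bits σ + a, ![0, 0]) ((2 : ℂ) • τ) p *
          thetaTerm (bits σ, ![0, 0]) ((2 : ℂ) • τ) q) := by
  have hsign (k : ℤ) : (-1 : ℂ) ^ k = Complex.exp (Real.pi * Complex.I * k) := by
    rw [← Complex.exp_pi_mul_I, ← Complex.exp_int_mul, mul_comm]
  have hperiod : Complex.exp (Real.pi * Complex.I * (2 * (p 0 * b 0 + p 1 * b 1))) = 1 :=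
    Complex.exp_eq_one_iff.mpr ⟨p 0 * b 0 + p 1 * b 1, by push_cast; ring⟩
  rw [hsign, ← mul_one (Complex.exp _ * _), ← hperiod]
  simp only [thetaTerm, ← Complex.exp_add]
  congr 1
  simp [Fin.sum_univ_two, duplicationEquiv, SiegelH2.apply_one_zero hτ]
  ring

lemma Θf_add_two_mul (ε e : Fin 2 → ℤ) (τ : Mat2) : Θf (ε + 2 * e) τ = Θf ε τ := by
  rw [Θf, Θf, theta_eq_tsum, theta_eq_tsum,
    ← (Equiv.addRight e).tsum_eq (thetaTerm (ε, ![0, 0]) _)]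
  refine tsum_congr fun n => ?_
  simp only [thetaTerm]
  congr 1
  simp [Fin.sum_univ_two]
  ring

lemma Θf_emod_two (ε : Fin 2 → ℤ) (τ : Mat2) : Θf ![ε 0 % 2, ε 1 % 2] τ = Θf ε τ := by
  have hε : ![ε 0 % 2, ε 1 % 2] + 2 * ![ε 0 / 2, ε 1 / 2] = ε := by
    ext i; fin_cases i <;> simp <;> omega
  rw [← hε, Θf_add_two_mul, hε]

lemma theta_sq_eq_sum (a b : Fin 2 → ℤ) {τ : Mat2} (hτ : τ ∈ SiegelH2) :
    theta (a, b) τ ^ 2 = ∑ σ : Fin 2 × Fin 2,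
      (-1) ^ ((bits σ 0 + a 0) * b 0 + (bits σ 1 + a 1) * b 1) *
        (Θf ![(bits σ 0 + a 0) % 2, (bits σ 1 + a 1) % 2] τ * Θf (bits σ) τ) := by
  have hsum := summable_norm_thetaTerm (a, b) hτ
  have hsum₂ (κ : Char) := summable_norm_thetaTerm κ (SiegelH2.two_smul_mem hτ)
  have hsum_dup := duplicationEquiv.summable_iff.mpr (summable_mul_of_summable_norm hsum hsum)
  rw [sq, theta_eq_tsum, tsum_mul_tsum_of_summable_norm hsum hsum, ← duplicationEquiv.tsum_eq,
    Summable.tsum_prod (by exact hsum_dup), tsum_fintype]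
  refine Finset.sum_congr rfl fun σ _ => ?_
  have hmod := Θf_emod_two (bits σ + a) τ
  simp only [Pi.add_apply] at hmod
  rw [hmod, Θf, Θf, theta_eq_tsum, theta_eq_tsum,
    tsum_mul_tsum_of_summable_norm (hsum₂ _) (hsum₂ _), ← tsum_mul_left]
  exact tsum_congr fun pq => thetaTerm_mul_thetaTerm_duplicationEquiv a b hτ σ pq.1 pq.2

/-- The coefficients of `θ⁴[δ_d]` with respect to `P₀, …, P₄`. -/
def quarticCoeff : Fin 10 → Fin 5 → ℤ :=
  ![![1, 1, 1, 1, 0], ![1, -1, 1, -1, 0], ![1, 1, -1, -1, 0], ![1, -1, -1, 1, 0],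
    ![0, 2, 0, 0, 2], ![0, 2, 0, 0, -2], ![0, 0, 2, 0, 2], ![0, 0, 2, 0, -2],
    ![0, 0, 0, 2, 2], ![0, 0, 0, 2, -2]]

lemma theta_δev_pow_four (d : Fin 10) {τ : Mat2} (hτ : τ ∈ SiegelH2) :
    theta (δev d) τ ^ 4 = ∑ m, quarticCoeff d m * Pv m τ := by
  have hsq : theta (δev d) τ ^ 4 = (theta ((δev d).1, (δev d).2) τ ^ 2) ^ 2 := by ring
  have hsum : ∑ m, quarticCoeff d m * Pv m τ = quarticCoeff d 0 * P0 τ + quarticCoeff d 1 * P1 τ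
      + quarticCoeff d 2 * P2 τ + quarticCoeff d 3 * P3 τ + quarticCoeff d 4 * P4 τ :=
    Fin.sum_univ_five _
  rw [hsq, theta_sq_eq_sum _ _ hτ, hsum, P0, P1, P2, P3, P4]
  simp only [Fintype.sum_prod_type, Fin.sum_univ_two, bits]
  fin_cases d <;>
  · simp [δev, quarticCoeff, zpow_ofNat]
    ring

end Duplication

section ExchangeOfTriples

/-- `θ⁴[δ_d]` as a function on the Siegel upper half space. -/
noncomputable def thetaPowFour (d : Fin 10) : SiegelH2 → ℂ := fun τ => theta (δev d) τ.1 ^ 4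

/-- `P_m` as a function on the Siegel upper half space. -/
noncomputable def siegelP (m : Fin 5) : SiegelH2 → ℂ := fun τ => Pv m τ.1

lemma thetaPowFour_eq_sum (d : Fin 10) :
    thetaPowFour d = ∑ m, quarticCoeff d m • siegelP m := by
  funext τ
  simp only [Finset.sum_apply, zsmul_eq_mul]
  exact theta_δev_pow_four d τ.2

/-- The four characteristics occurring in each of the fifteen quartic Riemann relations. -/
def riemannQuad : Fin 15 → Fin 4 → Fin 10 :=
  ![![0, 1, 4, 9], ![0, 1, 5, 8], ![0, 2, 6, 9], ![0, 2, 7, 8], ![0, 3, 4, 7], ![0, 3, 5, 6],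
    ![1, 2, 4, 6], ![1, 2, 5, 7], ![1, 3, 6, 8], ![1, 3, 7, 9], ![2, 3, 4, 8], ![2, 3, 5, 9],
    ![4, 5, 6, 7], ![4, 5, 8, 9], ![6, 7, 8, 9]]

/-- The signs in the fifteen quartic Riemann relations. -/
def riemannSign : Fin 15 → Fin 4 → ℤˣ :=
  ![![1, -1, -1, -1], ![1, -1, -1, -1], ![1, -1, -1, -1], ![1, -1, -1, -1], ![1, -1, -1, -1],
    ![1, -1, -1, -1], ![1, -1, 1, -1], ![1, -1, 1, -1], ![1, -1, -1, 1], ![1, -1, -1, 1],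
    ![1, -1, -1, 1], ![1, -1, -1, 1], ![1, -1, -1, 1], ![1, -1, -1, 1], ![1, -1, -1, 1]]

lemma sum_riemannSign_smul_thetaPowFour (r : Fin 15) :
    ∑ l, riemannSign r l • thetaPowFour (riemannQuad r l) = 0 := by
  have hcoeff : ∀ r m, ∑ l, (riemannSign r l : ℤ) * quarticCoeff (riemannQuad r l) m = 0 := by
    decide
  simp_rw [thetaPowFour_eq_sum, Finset.smul_sum, Units.smul_def, smul_smul]
  rw [Finset.sum_comm]
  simp_rw [← Finset.sum_smul, hcoeff, zero_smul, Finset.sum_const_zero]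

instance decidableIsEvenChar (κ : Char) : Decidable (IsEvenChar κ) :=
  inferInstanceAs (Decidable (_ = _))

lemma isEvenChar_or_exists_riemannQuad : ∀ i j k : Fin 10,
    IsEvenChar (addChar (addChar (δev i) (δev j)) (δev k)) ∨
      ∃ r l, riemannQuad r l = i ∧ ∀ l' ≠ l,
        IsEvenChar (addChar (addChar (δev (riemannQuad r l')) (δev j)) (δev k)) := by
  decide +kernel

/-- The span of the products `θ⁴[δᵢ]θ⁴[δⱼ]θ⁴[δₖ]` with `δᵢ+δⱼ+δₖ` even. -/
noncomputable def evenProductSpan : Submodule ℂ (SiegelH2 → ℂ) :=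
  Submodule.span ℂ {g | ∃ i j k : Fin 10,
    IsEvenChar (addChar (addChar (δev i) (δev j)) (δev k)) ∧
    g = fun τ : SiegelH2 =>
      theta (δev i) τ.1 ^ 4 * theta (δev j) τ.1 ^ 4 * theta (δev k) τ.1 ^ 4}

/-- The span of all the products `θ⁴[δᵢ]θ⁴[δⱼ]θ⁴[δₖ]`. -/
noncomputable def productSpan : Submodule ℂ (SiegelH2 → ℂ) :=
  Submodule.span ℂ {g | ∃ i j k : Fin 10,
    g = fun τ : SiegelH2 =>
      theta (δev i) τ.1 ^ 4 * theta (δev j) τ.1 ^ 4 * theta (δev k) τ.1 ^ 4}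

lemma mem_of_sum_units_smul_eq_zero {ι M : Type*} [Fintype ι] [AddCommGroup M]
    {E : AddSubgroup M} {c : ι → ℤˣ} {x : ι → M} (hsum : ∑ l, c l • x l = 0) {l : ι}
    (hmem : ∀ l' ≠ l, x l' ∈ E) : x l ∈ E := by
  classical
  rw [Fintype.sum_eq_add_sum_compl l] at hsum
  have hcl : c l • x l ∈ E := by
    rw [eq_neg_of_add_eq_zero_left hsum]
    refine E.neg_mem (E.sum_mem fun l' hl' => E.zsmul_mem (hmem l' ?_) (c l'))
    simpa using hl'
  rw [← inv_smul_smul (c l) (x l)]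
  exact E.zsmul_mem hcl ↑(c l)⁻¹

lemma thetaPowFour_mul_mul_mem_evenProductSpan (i j k : Fin 10) :
    thetaPowFour i * thetaPowFour j * thetaPowFour k ∈ evenProductSpan := by
  obtain heven | ⟨r, l, rfl, heven⟩ := isEvenChar_or_exists_riemannQuad i j k
  · exact Submodule.subset_span ⟨i, j, k, heven, rfl⟩
  have hsum : ∑ l, riemannSign r l •
      (thetaPowFour (riemannQuad r l) * thetaPowFour j * thetaPowFour k) = 0 := by
    simp_rw [mul_assoc, ← smul_mul_assoc, ← Finset.sum_mul,
      sum_riemannSign_smul_thetaPowFour, zero_mul]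
  exact mem_of_sum_units_smul_eq_zero (E := evenProductSpan.toAddSubgroup) hsum
    fun l' hl' => Submodule.subset_span ⟨_, j, k, heven l' hl', rfl⟩

lemma evenProductSpan_eq_productSpan : evenProductSpan = productSpan := by
  refine le_antisymm (Submodule.span_mono fun g ⟨i, j, k, _, hg⟩ => ⟨i, j, k, hg⟩)
    (Submodule.span_le.mpr ?_)
  rintro _ ⟨i, j, k, rfl⟩
  exact thetaPowFour_mul_mul_mem_evenProductSpan i j k

end ExchangeOfTriples

section LeadingExponentials

lemma exists_tendsto_exp_mul_tsum_exp_neg {ι : Type*} {a : ι → ℝ} {μ : ℝ}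
    (hsum : Summable fun i => Real.exp (-a i)) (hle : ∀ i, μ ≤ a i) (hattained : ∃ i, a i = μ) :
    ∃ L > 0, Tendsto (fun r : ℝ => Real.exp (r * μ) * ∑' i, Real.exp (-(r * a i))) atTop (𝓝 L) := by
  have hbound : Summable fun i => Real.exp (μ - a i) := by
    simpa only [sub_eq_add_neg, Real.exp_add] using hsum.mul_left (Real.exp μ)
  have hdecay (i : ι) : Tendsto (fun r : ℝ => Real.exp (r * (μ - a i))) atTop
      (𝓝 (if a i = μ then 1 else 0)) := by
    split_ifs with hi
    · simp [hi]
    · exact Real.tendsto_exp_atBot.comp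
        (tendsto_id.atTop_mul_const_of_neg (sub_neg.mpr ((hle i).lt_of_ne' hi)))
  have hdominated : ∀ᶠ r : ℝ in atTop, ∀ i, ‖Real.exp (r * (μ - a i))‖ ≤ Real.exp (μ - a i) := by
    filter_upwards [eventually_ge_atTop 1] with r hr i
    rw [Real.norm_eq_abs, Real.abs_exp, Real.exp_le_exp]
    nlinarith [hle i]
  have hlim := tendsto_tsum_of_dominated_convergence hbound hdecay hdominated
  refine ⟨_, ?_, hlim.congr fun r => ?_⟩
  · obtain ⟨i, hi⟩ := hattained
    have hsummable : Summable fun i => if a i = μ then (1 : ℝ) else 0 :=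
      hbound.of_nonneg_of_le (fun i => by positivity) fun i => by
        split_ifs with hi
        · simp [hi]
        · positivity
    exact hsummable.tsum_pos (fun i => by positivity) i (by simp [hi])
  · rw [← tsum_mul_left]
    refine tsum_congr fun i => ?_
    rw [← Real.exp_add]
    ring_nf

lemma eq_zero_of_sum_mul_eq_zero_of_tendsto_exp_mul {ι : Type*} {s : Finset ι} {w : ι → ℝ}
    (hw : Set.InjOn w s) {f : ι → ℝ → ℂ} {L : ι → ℂ} (hL : ∀ i ∈ s, L i ≠ 0)
    (hf : ∀ i ∈ s, Tendsto (fun r : ℝ => Complex.exp (r * w i) * f i r) atTop (𝓝 (L i)))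
    {c : ι → ℂ} (hsum : ∀ᶠ r in atTop, ∑ i ∈ s, c i * f i r = 0) : ∀ i ∈ s, c i = 0 := by
  classical
  by_contra! hne
  obtain ⟨i₀, hi₀, hmin⟩ := (s.filter (c · ≠ 0)).exists_min_image w
    (by simpa [Finset.filter_nonempty_iff] using hne)
  obtain ⟨his, hci⟩ := Finset.mem_filter.mp hi₀
  have hterm : ∀ i ∈ s, Tendsto (fun r : ℝ => Complex.exp (r * w i₀) * (c i * f i r)) atTop
      (𝓝 (if i = i₀ then c i₀ * L i₀ else 0)) := by
    intro i hi
    split_ifs with hii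
    · subst hii
      exact ((hf i hi).const_mul (c i)).congr fun r => by ring
    obtain hc | hc := eq_or_ne (c i) 0
    · simp [hc]
    have hlt : w i₀ - w i < 0 := sub_neg.mpr <|
      (hmin i (Finset.mem_filter.mpr ⟨hi, hc⟩)).lt_of_ne' fun h => hii (hw hi his h)
    have hexp : Tendsto (fun r : ℝ => Complex.exp (r * (w i₀ - w i))) atTop (𝓝 0) := by
      have := (Complex.continuous_ofReal.tendsto 0).comp
        (Real.tendsto_exp_atBot.comp (tendsto_id.atTop_mul_const_of_neg hlt))
      simpa [Function.comp_def] using this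
    have hprod := (hexp.mul (hf i hi)).const_mul (c i)
    rw [zero_mul, mul_zero] at hprod
    refine hprod.congr fun r => ?_
    rw [mul_sub, Complex.exp_sub]
    field_simp [Complex.exp_ne_zero]
  have hlim := tendsto_finsetSum s hterm
  rw [Finset.sum_ite_eq' s i₀, if_pos his] at hlim
  refine mul_ne_zero hci (hL i₀ his) (tendsto_nhds_unique hlim (tendsto_const_nhds.congr' ?_))
  filter_upwards [hsum] with r hr
  rw [← Finset.mul_sum, hr, mul_zero]

end LeadingExponentials

section SecondOrderThetas

/-- The vector of the four second-order theta constants `Θ[ε](τ)`. -/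
noncomputable def secondOrderTheta (τ : Mat2) (σ : Fin 2 × Fin 2) : ℂ := Θf (bits σ) τ

/-- The binary quadratic form `p x² + q y² + s (x - y)²` with Selling parameters `p, q, s`. -/
def sellingForm (p q s : ℝ) (v : Fin 2 → ℤ) : ℝ :=
  p * v 0 ^ 2 + q * v 1 ^ 2 + s * (v 0 - v 1) ^ 2

/-- The purely imaginary point at which `Θ[ε] = ∑ n, exp (-r * sellingForm p q s (2 * n + ε))`. -/
noncomputable def sellingPoint (p q s r : ℝ) : Mat2 :=
  ((2 * r / Real.pi : ℝ) * Complex.I) • !![(p + s : ℂ), -s; -s, q + s]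

lemma sellingPoint_mem_siegelH2 {p q s r : ℝ} (hp : 0 < p) (hq : 0 < q) (hs : 0 < s) (hr : 0 < r) :
    sellingPoint p q s r ∈ SiegelH2 := by
  have him : (sellingPoint p q s r).map Complex.im =
      (2 * r / Real.pi) • !![p + s, -s; -s, q + s] := by
    ext i j; fin_cases i <;> fin_cases j <;> simp [sellingPoint, -Complex.ofReal_div]
  refine ⟨by ext i j; fin_cases i <;> fin_cases j <;> simp [sellingPoint], ?_⟩
  rw [him]
  refine Matrix.PosDef.smul (.of_dotProduct_mulVec_pos ?_ fun x hx => ?_) (by positivity)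
  · ext i j; fin_cases i <;> fin_cases j <;> simp
  have hform : star x ⬝ᵥ !![p + s, -s; -s, q + s].mulVec x =
      p * x 0 ^ 2 + q * x 1 ^ 2 + s * (x 0 - x 1) ^ 2 := by
    simp [Matrix.mulVec, dotProduct, Fin.sum_univ_two]; ring
  rw [hform]
  obtain h0 | h0 := eq_or_ne (x 0) 0
  · have h1 : x 1 ≠ 0 := fun h1 => hx (by ext i; fin_cases i <;> assumption)
    positivity
  · positivity

lemma thetaTerm_two_smul_sellingPoint (p q s r : ℝ) (ε n : Fin 2 → ℤ) :
    thetaTerm (ε, ![0, 0]) ((2 : ℂ) • sellingPoint p q s r) n =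
      Real.exp (-(r * sellingForm p q s (2 * n + ε))) := by
  rw [thetaTerm, Complex.ofReal_exp]
  congr 1
  simp [Fin.sum_univ_two, sellingPoint, sellingForm]
  field_simp
  ring_nf
  simp only [Complex.I_sq]
  ring

lemma sellingForm_bits_le {p q s : ℝ} (hp : 0 ≤ p) (hq : 0 ≤ q) (hs : 0 ≤ s)
    (σ : Fin 2 × Fin 2) (n : Fin 2 → ℤ) :
    sellingForm p q s (bits σ) ≤ sellingForm p q s (2 * n + bits σ) := by
  have hsq {b : ℤ} (hb : |b| ≤ 1) (m : ℤ) : (b : ℝ) ^ 2 ≤ (2 * m + b) ^ 2 := by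
    have : b ^ 2 ≤ (2 * m + b) ^ 2 := by
      obtain ⟨hlo, hhi⟩ := abs_le.mp hb
      obtain hm | rfl | hm := lt_trichotomy m 0
      · nlinarith
      · simp
      · nlinarith
    exact_mod_cast this
  obtain ⟨h₀, h₁, h₂⟩ : |bits σ 0| ≤ 1 ∧ |bits σ 1| ≤ 1 ∧ |bits σ 0 - bits σ 1| ≤ 1 := by
    revert σ; decide
  have hdiff := hsq h₂ (n 0 - n 1)
  push_cast at hdiff
  simp only [sellingForm, Pi.add_apply, Pi.mul_apply, Pi.ofNat_apply, Int.cast_add, Int.cast_mul,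
    Int.cast_ofNat]
  exact add_le_add (add_le_add (mul_le_mul_of_nonneg_left (hsq h₀ _) hp)
    (mul_le_mul_of_nonneg_left (hsq h₁ _) hq))
    (mul_le_mul_of_nonneg_left (hdiff.trans_eq (by ring)) hs)

lemma exists_tendsto_exp_mul_secondOrderTheta {p q s : ℝ} (hp : 0 < p) (hq : 0 < q) (hs : 0 < s)
    (σ : Fin 2 × Fin 2) :
    ∃ L ≠ 0, Tendsto (fun r : ℝ => Complex.exp (r * sellingForm p q s (bits σ)) *
      secondOrderTheta (sellingPoint p q s r) σ) atTop (𝓝 L) := by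
  have hsum : Summable fun n => Real.exp (-sellingForm p q s (2 * n + bits σ)) := by
    have := summable_norm_thetaTerm (bits σ, ![0, 0])
      (SiegelH2.two_smul_mem (sellingPoint_mem_siegelH2 hp hq hs one_pos))
    simpa only [thetaTerm_two_smul_sellingPoint, one_mul, Complex.norm_real, Real.norm_eq_abs,
      Real.abs_exp] using this
  obtain ⟨L, hL, hlim⟩ := exists_tendsto_exp_mul_tsum_exp_neg hsum
    (sellingForm_bits_le hp.le hq.le hs.le σ) ⟨0, by simp⟩
  refine ⟨L, Complex.ofReal_ne_zero.mpr hL.ne',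
    ((Complex.continuous_ofReal.tendsto L).comp hlim).congr fun r => ?_⟩
  simp [secondOrderTheta, Θf, theta_eq_tsum, thetaTerm_two_smul_sellingPoint, Complex.ofReal_tsum]

lemma tendsto_exp_mul_prod_secondOrderTheta {p q s : ℝ} {L : Fin 2 × Fin 2 → ℂ}
    (hL : ∀ σ, Tendsto (fun r : ℝ => Complex.exp (r * sellingForm p q s (bits σ)) *
      secondOrderTheta (sellingPoint p q s r) σ) atTop (𝓝 (L σ))) (m : Fin 2 × Fin 2 →₀ ℕ) :
    Tendsto (fun r : ℝ => Complex.exp (r * ((∑ σ, m σ * sellingForm p q s (bits σ) : ℝ) : ℂ)) *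
      ∏ σ, secondOrderTheta (sellingPoint p q s r) σ ^ m σ) atTop (𝓝 (∏ σ, L σ ^ m σ)) := by
  refine (tendsto_finsetProd _ fun σ _ => (hL σ).pow (m σ)).congr fun r => ?_
  simp_rw [mul_pow, Finset.prod_mul_distrib, ← Complex.exp_nat_mul, ← Complex.exp_sum]
  push_cast
  rw [Finset.mul_sum]
  exact congrArg₂ _ (congrArg _ (Finset.sum_congr rfl fun σ _ => by ring)) rfl

/- With `N = D + 2` the form takes the values `0`, `N + N ^ 2`, `1 + N ^ 2`, `1 + N` at `00`, `01`,
`10`, `11`, so the base `N` digits of the weight, along with the degree, determine the exponents. -/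
lemma injOn_sum_mul_sellingForm (D : ℕ) :
    Set.InjOn (fun m : Fin 2 × Fin 2 →₀ ℕ =>
      ∑ σ, m σ * sellingForm 1 (D + 2) ((D + 2) ^ 2) (bits σ)) {m | m.degree = D} := by
  have hdigits (m : Fin 2 × Fin 2 →₀ ℕ) :
      ∑ σ, m σ * sellingForm 1 (D + 2) ((D + 2) ^ 2) (bits σ) = (Nat.ofDigits (D + 2)
        [m (1, 0) + m (1, 1), m (0, 1) + m (1, 1), m (0, 1) + m (1, 0)] : ℕ) := by
    simp [Fintype.sum_prod_type, sellingForm, bits, Nat.ofDigits]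
    ring
  have hdegree (m : Fin 2 × Fin 2 →₀ ℕ) :
      m.degree = m (0, 0) + m (0, 1) + (m (1, 0) + m (1, 1)) := by
    simp [Finsupp.degree_eq_sum, Fintype.sum_prod_type]
  have hlt {m : Fin 2 × Fin 2 →₀ ℕ} (hm : m.degree = D) :
      ∀ d ∈ [m (1, 0) + m (1, 1), m (0, 1) + m (1, 1), m (0, 1) + m (1, 0)], d < D + 2 := by
    rw [hdegree] at hm
    simp only [List.mem_cons, List.not_mem_nil, or_false, forall_eq_or_imp, forall_eq]
    omega
  intro m hm m' hm' h
  rw [Set.mem_ofPred_eq] at hm hm'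
  simp only [hdigits, Nat.cast_inj] at h
  have hdig := Nat.ofDigits_inj_of_len_eq (by omega) (by rfl) (hlt hm) (hlt hm') h
  rw [hdegree] at hm hm'
  simp only [List.cons.injEq, and_true] at hdig
  ext ⟨i, j⟩
  fin_cases i <;> fin_cases j <;> simp <;> omega

theorem eq_zero_of_eval_secondOrderTheta_eq_zero {G : MvPolynomial (Fin 2 × Fin 2) ℂ} {D : ℕ}
    (hG : G.IsHomogeneous D)
    (heval : ∀ τ ∈ SiegelH2, MvPolynomial.eval (secondOrderTheta τ) G = 0) : G = 0 := by
  have hN : (0 : ℝ) < D + 2 := by positivity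
  choose L hL hlim using
    exists_tendsto_exp_mul_secondOrderTheta one_pos hN (pow_pos hN 2)
  have hinj := (injOn_sum_mul_sellingForm D).mono (s₁ := G.support) fun m hm => by
    simpa [Finsupp.weight_apply, Finsupp.degree_eq_sum, Finsupp.sum_fintype] using
      hG (MvPolynomial.mem_support_iff.mp hm)
  have hcoeff := eq_zero_of_sum_mul_eq_zero_of_tendsto_exp_mul hinj
    (fun m _ => Finset.prod_ne_zero_iff.mpr fun σ _ => pow_ne_zero (m σ) (hL σ))
    (fun m _ => tendsto_exp_mul_prod_secondOrderTheta hlim m) (c := G.coeff) <| by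
      filter_upwards [eventually_gt_atTop 0] with r hr
      rw [← MvPolynomial.eval_eq']
      exact heval _ (sellingPoint_mem_siegelH2 one_pos hN (pow_pos hN 2) hr)
  rw [← MvPolynomial.support_eq_empty, Finset.eq_empty_iff_forall_notMem]
  exact fun m hm => MvPolynomial.mem_support_iff.mp hm (hcoeff m hm)

end SecondOrderThetas

section IgusaQuartic

open MvPolynomial

lemma eval_aeval_eq_eval {R σ τ : Type*} [CommSemiring R] (v : τ → R) (f : σ → MvPolynomial τ R)
    (F : MvPolynomial σ R) : eval v (aeval f F) = eval (fun m => eval v (f m)) F := by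
  simp only [← coe_aeval_eq_eval, RingHom.coe_coe, comp_aeval_apply]

lemma eq_zero_of_natDegree_lt_four_of_biquadratic {K : Type*} [Field K] [IsAlgClosed K]
    [NeZero (2 : K)] {a b : K} (hb : b ≠ 0) (hab : a ^ 2 ≠ b) {p : Polynomial K}
    (hdeg : p.natDegree < 4) (hroot : ∀ t, (t ^ 2 - a) ^ 2 = b → p.eval t = 0) : p = 0 := by
  obtain ⟨β, rfl⟩ := IsAlgClosed.exists_pow_nat_eq b two_pos
  obtain ⟨u, hu⟩ := IsAlgClosed.exists_pow_nat_eq (a + β) two_pos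
  obtain ⟨w, hw⟩ := IsAlgClosed.exists_pow_nat_eq (a - β) two_pos
  have htwo : (2 : K) ≠ 0 := two_ne_zero
  have hβ : β ≠ 0 := by rintro rfl; simp at hb
  have hu₀ : u ≠ 0 := by rintro rfl; exact hab (by linear_combination (β - a) * hu)
  have hw₀ : w ≠ 0 := by rintro rfl; exact hab (by linear_combination (-β - a) * hw)
  have huw : u ^ 2 ≠ w ^ 2 := fun h =>
    mul_ne_zero htwo hβ (by linear_combination h - hu + hw)
  have hneg {x : K} (hx : x ≠ 0) : x ≠ -x := fun h =>
    mul_ne_zero htwo hx (by linear_combination h)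
  have huw' : u ≠ w ∧ u ≠ -w ∧ -u ≠ w ∧ -u ≠ -w := by
    refine ⟨?_, ?_, ?_, ?_⟩ <;> exact fun h => huw (by grind)
  classical
  refine Polynomial.eq_zero_of_natDegree_lt_card_of_eval_eq_zero' p {u, -u, w, -w} ?_ ?_
  · intro t ht
    simp only [Finset.mem_insert, Finset.mem_singleton] at ht
    refine hroot t ?_
    obtain rfl | rfl | rfl | rfl := ht <;> grind
  · obtain ⟨h₁, h₂, h₃, h₄⟩ := huw'
    simpa [Finset.card_insert_of_notMem, hneg hu₀, hneg hw₀, h₁, h₂, h₃, h₄] using hdeg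

/-- The Igusa quartic is the hypersurface `(t ^ 2 - igusaCentre x) ^ 2 = igusaProd x`, where
`t = P₄` and `x = (θ⁴[δ₁], …, θ⁴[δ₄])`; this is the term `igusaCentre`. -/
noncomputable def igusaCentre : MvPolynomial (Fin 4) ℂ :=
  C (1 / 16) * (X 0 ^ 2 + X 1 ^ 2 + X 2 ^ 2 + X 3 ^ 2 - 2 * (X 0 * X 1 + X 0 * X 2 + X 0 * X 3
    + X 1 * X 2 + X 1 * X 3 + X 2 * X 3))

/-- The right-hand side of the equation `(t ^ 2 - igusaCentre x) ^ 2 = igusaProd x` of the Igusa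
quartic. -/
noncomputable def igusaProd : MvPolynomial (Fin 4) ℂ := C (1 / 4) * (X 0 * X 1 * X 2 * X 3)

/-- The quartic forms expressing `P₄, θ⁴[δ₁], …, θ⁴[δ₄]` in the second-order theta constants. -/
noncomputable def frameForm : Fin 5 → MvPolynomial (Fin 2 × Fin 2) ℂ :=
  ![C 4 * (X (0, 0) * X (0, 1) * X (1, 0) * X (1, 1)),
    (X (0, 0) ^ 2 + X (0, 1) ^ 2 + X (1, 0) ^ 2 + X (1, 1) ^ 2) ^ 2,
    (X (0, 0) ^ 2 - X (0, 1) ^ 2 + X (1, 0) ^ 2 - X (1, 1) ^ 2) ^ 2,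
    (X (0, 0) ^ 2 + X (0, 1) ^ 2 - X (1, 0) ^ 2 - X (1, 1) ^ 2) ^ 2,
    (X (0, 0) ^ 2 - X (0, 1) ^ 2 - X (1, 0) ^ 2 + X (1, 1) ^ 2) ^ 2]

lemma isHomogeneous_frameForm (m : Fin 5) : (frameForm m).IsHomogeneous 4 := by
  have hX (σ : Fin 2 × Fin 2) : (X σ : MvPolynomial _ ℂ).IsHomogeneous 1 := isHomogeneous_X ℂ σ
  have hsq (σ : Fin 2 × Fin 2) : (X σ ^ 2 : MvPolynomial _ ℂ).IsHomogeneous 2 := (hX σ).pow 2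
  fin_cases m
  · exact ((((hX _).mul (hX _)).mul (hX _)).mul (hX _)).C_mul 4
  · exact ((((hsq _).add (hsq _)).add (hsq _)).add (hsq _)).pow 2
  · exact ((((hsq _).sub (hsq _)).add (hsq _)).sub (hsq _)).pow 2
  · exact ((((hsq _).add (hsq _)).sub (hsq _)).sub (hsq _)).pow 2
  · exact ((((hsq _).sub (hsq _)).sub (hsq _)).add (hsq _)).pow 2

lemma exists_eval_frameForm_eq_of_sq {t : ℂ} {x s : Fin 4 → ℂ} (hs : ∀ i, s i ^ 2 = x i)
    (ht : t ^ 2 - eval x igusaCentre = s 0 * s 1 * s 2 * s 3 / 2) :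
    ∃ v, (fun m => eval v (frameForm m)) = Fin.cons t x := by
  obtain ⟨a, ha⟩ := IsAlgClosed.exists_pow_nat_eq ((s 0 + s 1 + s 2 + s 3) / 4) two_pos
  obtain ⟨b, hb⟩ := IsAlgClosed.exists_pow_nat_eq ((s 0 - s 1 + s 2 - s 3) / 4) two_pos
  obtain ⟨c, hc⟩ := IsAlgClosed.exists_pow_nat_eq ((s 0 + s 1 - s 2 - s 3) / 4) two_pos
  obtain ⟨d, hd⟩ := IsAlgClosed.exists_pow_nat_eq ((s 0 - s 1 - s 2 + s 3) / 4) two_pos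
  obtain ⟨a', ha', ht'⟩ : ∃ a', a' ^ 2 = a ^ 2 ∧ 4 * (a' * b * c * d) = t := by
    have hsq : t ^ 2 = (4 * (a * b * c * d)) ^ 2 := by
      simp_rw [mul_pow, ha, hb, hc, hd]
      rw [eq_add_of_sub_eq ht]
      simp [igusaCentre, ← hs]
      ring
    obtain heq | heq := sq_eq_sq_iff_eq_or_eq_neg.mp hsq
    · exact ⟨a, rfl, heq.symm⟩
    · exact ⟨-a, neg_sq a, by rw [heq]; ring⟩
  refine ⟨fun σ => ![![a', b], ![c, d]] σ.1 σ.2, funext fun m => ?_⟩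
  cases m using Fin.cases with
  | zero => simpa [frameForm] using ht'
  | succ i =>
    rw [Fin.cons_succ, ← hs i]
    fin_cases i <;>
    · simp [frameForm, ha', ha, hb, hc, hd]
      ring

lemma exists_eval_frameForm_eq {t : ℂ} {x : Fin 4 → ℂ}
    (h : (t ^ 2 - eval x igusaCentre) ^ 2 = eval x igusaProd) :
    ∃ v, (fun m => eval v (frameForm m)) = Fin.cons t x := by
  choose s hs using fun i => IsAlgClosed.exists_pow_nat_eq (x i) two_pos
  have hsq : (t ^ 2 - eval x igusaCentre) ^ 2 = (s 0 * s 1 * s 2 * s 3 / 2) ^ 2 := by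
    rw [h]
    simp [igusaProd, ← hs]
    ring
  obtain heq | heq := sq_eq_sq_iff_eq_or_eq_neg.mp hsq
  · exact exists_eval_frameForm_eq_of_sq hs heq
  · refine exists_eval_frameForm_eq_of_sq (s := ![-s 0, s 1, s 2, s 3]) (fun i => ?_) ?_
    · fin_cases i <;> simp [hs]
    · simp [heq]
      ring

theorem eq_zero_of_aeval_frameForm_eq_zero {F : MvPolynomial (Fin 5) ℂ} (hdeg : F.totalDegree < 4)
    (h : aeval frameForm F = 0) : F = 0 := by
  have hdiscr : igusaProd * (igusaCentre ^ 2 - igusaProd) ≠ 0 := fun hzero => by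
    have := congrArg (eval ![16, 1, 1, 1]) hzero
    simp [igusaCentre, igusaProd] at this
    norm_num at this
  have hfibre (x : Fin 4 → ℂ) (hx : eval x (igusaProd * (igusaCentre ^ 2 - igusaProd)) ≠ 0) :
      (finSuccEquiv ℂ 4 F).map (eval x) = 0 := by
    rw [map_mul, map_sub, map_pow, mul_ne_zero_iff, sub_ne_zero] at hx
    refine eq_zero_of_natDegree_lt_four_of_biquadratic hx.1 hx.2 ?_ fun t ht => ?_
    · exact Polynomial.natDegree_map_le.trans_lt <|
        (natDegree_finSuccEquiv F).trans_lt <| (degreeOf_le_totalDegree F 0).trans_lt hdeg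
    · obtain ⟨v, hv⟩ := exists_eval_frameForm_eq ht
      rw [← eval_eq_eval_mv_eval', ← hv, ← eval_aeval_eq_eval, h, map_zero]
  rw [← (finSuccEquiv ℂ 4).map_eq_zero_iff]
  ext1 n
  refine (mul_eq_zero.mp (MvPolynomial.funext fun x => ?_)).resolve_right hdiscr
  rw [map_mul, map_zero, mul_eq_zero, or_iff_not_imp_right]
  intro hx
  simpa using congrArg (Polynomial.coeff · n) (hfibre x hx)

end IgusaQuartic

section Dimension

open MvPolynomial

lemma finrank_homogeneousSubmodule (R σ : Type*) [CommRing R] [Nontrivial R] [Fintype σ] (n : ℕ) :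
    Module.finrank R (homogeneousSubmodule σ R n) = (Fintype.card σ).multichoose n := by
  classical
  have hfinset : {d : σ →₀ ℕ | d.degree = n} = ((Finset.univ : Finset σ).finsuppAntidiag n) := by
    ext d
    simp [Finsupp.degree_eq_sum]
  rw [homogeneousSubmodule_eq_finsupp_supported, hfinset,
    (AddMonoidAlgebra.supportedEquivFinsupp _).finrank_eq, Module.finrank_finsupp_self]
  simp [Finset.card_finsuppAntidiag_nat_eq_multichoose]

lemma span_range_pow_eq_map_aeval {R A σ : Type*} [CommSemiring R] [CommSemiring A] [Algebra R A]
    (v : σ → A) (n : ℕ) : Submodule.span R (Set.range v) ^ n =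
      (homogeneousSubmodule σ R n).map (aeval v).toLinearMap := by
  rw [← homogeneousSubmodule_one_pow, homogeneousSubmodule_one_eq_span_X, Submodule.map_pow,
    Submodule.map_span, ← Set.range_comp]
  congr 3
  ext1 i
  simp

/-- The basis `P₄, θ⁴[δ₁], …, θ⁴[δ₄]` of the space spanned by the fourth powers of the even theta
constants, chosen because the Igusa quartic is biquadratic in its first member. -/
noncomputable def thetaFrame : Fin 5 → SiegelH2 → ℂ :=
  ![siegelP 4, thetaPowFour 0, thetaPowFour 1, thetaPowFour 2, thetaPowFour 3]

lemma eval_secondOrderTheta_frameForm (τ : SiegelH2) (m : Fin 5) :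
    eval (secondOrderTheta τ) (frameForm m) = thetaFrame m τ := by
  fin_cases m
  · simp [frameForm, thetaFrame, siegelP, Pv, P4, secondOrderTheta, bits]
  all_goals
    simp [frameForm, thetaFrame, thetaPowFour_eq_sum, Fin.sum_univ_five, quarticCoeff, siegelP, Pv,
      P0, P1, P2, P3, secondOrderTheta, bits]
    ring

lemma siegelP_mem_span_thetaFrame (m : Fin 5) :
    siegelP m ∈ Submodule.span ℂ (Set.range thetaFrame) := by
  have hinv : siegelP m = ∑ i, (![![0, 1, 1, 1, 1], ![0, 1, -1, 1, -1], ![0, 1, 1, -1, -1],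
      ![0, 1, -1, -1, 1], ![4, 0, 0, 0, 0]] m i / 4 : ℂ) • thetaFrame i := by
    ext τ
    fin_cases m <;>
      simp [thetaFrame, thetaPowFour_eq_sum, Fin.sum_univ_five, quarticCoeff] <;> ring
  rw [hinv]
  exact Submodule.sum_mem _ fun i _ =>
    Submodule.smul_mem _ _ (Submodule.subset_span (Set.mem_range_self i))

lemma span_range_thetaPowFour_eq_span_range_thetaFrame :
    Submodule.span ℂ (Set.range thetaPowFour) = Submodule.span ℂ (Set.range thetaFrame) := by
  refine le_antisymm (Submodule.span_le.mpr ?_) (Submodule.span_le.mpr ?_)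
  · rintro _ ⟨d, rfl⟩
    rw [thetaPowFour_eq_sum]
    exact Submodule.sum_mem _ fun m _ => zsmul_mem (siegelP_mem_span_thetaFrame m) _
  · have hmem (d : Fin 10) : thetaPowFour d ∈ Submodule.span ℂ (Set.range thetaPowFour) :=
      Submodule.subset_span (Set.mem_range_self d)
    have hP4 : siegelP 4 = (1 / 4 : ℂ) • (thetaPowFour 4 - thetaPowFour 5) := by
      ext τ
      simp [thetaPowFour_eq_sum, Fin.sum_univ_five, quarticCoeff]
      ring
    rintro _ ⟨i, rfl⟩
    fin_cases i
    · change siegelP 4 ∈ _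
      rw [hP4]
      exact Submodule.smul_mem _ _ (Submodule.sub_mem _ (hmem 4) (hmem 5))
    exacts [hmem 0, hmem 1, hmem 2, hmem 3]

lemma productSpan_eq_span_range_thetaFrame_pow :
    productSpan = Submodule.span ℂ (Set.range thetaFrame) ^ 3 := by
  rw [← span_range_thetaPowFour_eq_span_range_thetaFrame, pow_three', Submodule.span_mul_span,
    Submodule.span_mul_span]
  refine congrArg _ (Set.ext fun g => ⟨?_, ?_⟩)
  · rintro ⟨i, j, k, rfl⟩
    exact ⟨_, ⟨_, ⟨i, rfl⟩, _, ⟨j, rfl⟩, rfl⟩, _, ⟨k, rfl⟩, rfl⟩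
  · rintro ⟨_, ⟨_, ⟨i, rfl⟩, _, ⟨j, rfl⟩, rfl⟩, _, ⟨k, rfl⟩, rfl⟩
    exact ⟨i, j, k, rfl⟩

theorem eq_zero_of_aeval_thetaFrame_eq_zero {F : MvPolynomial (Fin 5) ℂ} {n : ℕ}
    (hF : F.IsHomogeneous n) (hn : n < 4) (h : aeval thetaFrame F = 0) : F = 0 := by
  refine eq_zero_of_aeval_frameForm_eq_zero (hF.totalDegree_le.trans_lt hn) <|
    eq_zero_of_eval_secondOrderTheta_eq_zero (hF.aeval frameForm isHomogeneous_frameForm)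
      fun τ hτ => ?_
  simp_rw [eval_aeval_eq_eval, eval_secondOrderTheta_frameForm ⟨τ, hτ⟩]
  simpa [comp_aeval_apply, aeval_eq_eval] using congrArg (Pi.evalAlgHom ℂ _ ⟨τ, hτ⟩) h

theorem finrank_productSpan : Module.finrank ℂ productSpan = 35 := by
  rw [productSpan_eq_span_range_thetaFrame_pow, span_range_pow_eq_map_aeval,
    ← LinearMap.range_domRestrict, LinearMap.finrank_range_of_inj, finrank_homogeneousSubmodule]
  · simp [Nat.multichoose_eq, Nat.choose]
  · rw [← LinearMap.ker_eq_bot, LinearMap.ker_eq_bot']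
    rintro ⟨F, hF⟩ h
    exact Subtype.ext (eq_zero_of_aeval_thetaFrame_eq_zero hF (by norm_num) h)

theorem Ψ6_mem_evenProductSpan : (fun τ : SiegelH2 => Ψ6 τ.1) ∈ evenProductSpan := by
  have hcube (i j k : Fin 5) : siegelP i * siegelP j * siegelP k ∈ evenProductSpan := by
    rw [evenProductSpan_eq_productSpan, productSpan_eq_span_range_thetaFrame_pow, pow_three']
    exact Submodule.mul_mem_mul (Submodule.mul_mem_mul (siegelP_mem_span_thetaFrame i)
      (siegelP_mem_span_thetaFrame j)) (siegelP_mem_span_thetaFrame k)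
  have hΨ : (fun τ : SiegelH2 => Ψ6 τ.1) =
      siegelP 0 * siegelP 0 * siegelP 0
        - (9 : ℂ) • (siegelP 0 * siegelP 1 * siegelP 1 + siegelP 0 * siegelP 2 * siegelP 2
          + siegelP 0 * siegelP 3 * siegelP 3 - (4 : ℂ) • (siegelP 0 * siegelP 4 * siegelP 4))
        + (54 : ℂ) • (siegelP 1 * siegelP 2 * siegelP 3) := by
    ext τ
    simp [Ψ6, siegelP, Pv]
    ring
  rw [hΨ]
  exact add_mem (sub_mem (hcube 0 0 0) (Submodule.smul_mem _ _ (sub_mem (add_mem (add_mem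
    (hcube 0 1 1) (hcube 0 2 2)) (hcube 0 3 3)) (Submodule.smul_mem _ _ (hcube 0 4 4)))))
    (Submodule.smul_mem _ _ (hcube 1 2 3))

end Dimension

/-- the span of the products `θ⁴[δᵢ]θ⁴[δⱼ]θ⁴[δₖ]` with `δᵢ+δⱼ+δₖ` even equals
the span of all such products, has dimension exactly 35, and contains `Ψ₆`. -/
theorem statement14 :
    Submodule.span ℂ
      {g : SiegelH2 → ℂ | ∃ i j k : Fin 10,
        IsEvenChar (addChar (addChar (δev i) (δev j)) (δev k)) ∧
        g = fun τ : SiegelH2 =>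
          theta (δev i) τ.1 ^ 4 * theta (δev j) τ.1 ^ 4 * theta (δev k) τ.1 ^ 4}
      = Submodule.span ℂ
        {g : SiegelH2 → ℂ | ∃ i j k : Fin 10,
          g = fun τ : SiegelH2 =>
            theta (δev i) τ.1 ^ 4 * theta (δev j) τ.1 ^ 4 * theta (δev k) τ.1 ^ 4} ∧
    Module.finrank ℂ ↥(Submodule.span ℂ
      {g : SiegelH2 → ℂ | ∃ i j k : Fin 10,
        g = fun τ : SiegelH2 =>
          theta (δev i) τ.1 ^ 4 * theta (δev j) τ.1 ^ 4 * theta (δev k) τ.1 ^ 4}) = 35 ∧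
    (fun τ : SiegelH2 => Ψ6 τ.1) ∈ Submodule.span ℂ
      {g : SiegelH2 → ℂ | ∃ i j k : Fin 10,
        IsEvenChar (addChar (addChar (δev i) (δev j)) (δev k)) ∧
        g = fun τ : SiegelH2 =>
          theta (δev i) τ.1 ^ 4 * theta (δev j) τ.1 ^ 4 * theta (δev k) τ.1 ^ 4} := by
  exact ⟨evenProductSpan_eq_productSpan, finrank_productSpan, Ψ6_mem_evenProductSpan⟩

end TwoLoop
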